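/- arXiv:1710.08223 — 9 statements merged into one kernel-verified Lean document; each statement's English description precedes it below -/
import Mathlib

section
/- For every real r > 0 and every real κ ≥ 0, the Gaussian mass of the integer tail beyond √κ·r satisfies ∑_{j∈ℤ, |j| > √κ·r} exp(−π j²/r²) ≤ 2·exp(−(3π/4)·κ) · ∑_{j∈ℤ} exp(−π j²/r²). -/
open Real

lemma gtb_summable (a : ℝ) (ha : 0 < a) :
    Summable (fun n : ℤ => Real.exp (-π * a * (n : ℝ)^2)) := by
  have h := (summable_jacobiTheta₂_term_iff 0 (Complex.I * a)).2 (by simpa using ha)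
  refine h.norm.congr fun n => ?_
  rw [norm_jacobiTheta₂_term]
  simp
  ring_nf

lemma gtb_double (a : ℝ) (ha : 0 < a) :
    (∑' n : ℤ, Real.exp (-π * (a / 4) * (n : ℝ)^2)) ≤
      2 * ∑' n : ℤ, Real.exp (-π * a * (n : ℝ)^2) := by
  rw [Real.tsum_exp_neg_mul_int_sq ha, Real.tsum_exp_neg_mul_int_sq (a := a / 4) (by positivity)]
  have h2 : (a / 4) ^ (1 / 2 : ℝ) = a ^ (1 / 2 : ℝ) / 2 := by
    rw [← Real.sqrt_eq_rpow, ← Real.sqrt_eq_rpow, Real.sqrt_div ha.le]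
    congr 1
    rw [show (4 : ℝ) = 2 ^ 2 by norm_num, Real.sqrt_sq (by norm_num)]
  rw [h2, show 1 / (a ^ (1 / 2 : ℝ) / 2) = 2 * (1 / a ^ (1 / 2 : ℝ)) by field_simp, mul_assoc]
  have s1 := gtb_summable (1 / (a / 4)) (by positivity)
  have s2 := gtb_summable (1 / a) (by positivity)
  have e : ∀ b : ℝ, -π * (1 / b) = -π / b := fun b => by ring
  simp only [e] at s1 s2
  have h0 : (0 : ℝ) ≤ 1 / a ^ (1 / 2 : ℝ) := by positivity
  refine mul_le_mul_of_nonneg_left (mul_le_mul_of_nonneg_left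
    (s1.tsum_le_tsum (fun n => ?_) s2) h0) (by norm_num)
  apply Real.exp_le_exp.2
  have h3 : -π / (a / 4) * (n : ℝ)^2 = 4 * (-π / a * (n : ℝ)^2) := by field_simp
  have h4 : 0 ≤ π / a * (n : ℝ)^2 := by positivity
  have h5 : -π / a * (n : ℝ)^2 = - (π / a * (n : ℝ)^2) := by ring
  rw [h3, h5]
  linarith

/-- **Gaussian tail bound over the integers** (paper's Lemma 2.1, explicit constant).
For every `r > 0` and `κ ≥ 0`, the Gaussian mass of the integer tail beyond `√κ · r`
satisfies `∑_{j ∈ ℤ, |j| > √κ·r} exp(−π j²/r²) ≤ 2 exp(−(3π/4) κ) ∑_{j ∈ ℤ} exp(−π j²/r²)`. -/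
theorem gaussian_tail_bound (r κ : ℝ) (hr : 0 < r) (hκ : 0 ≤ κ) :
    (∑' j : {j : ℤ // Real.sqrt κ * r < |(j : ℝ)|}, Real.exp (-π * ((j : ℤ) : ℝ)^2 / r^2))
      ≤ 2 * Real.exp (-(3 * π / 4) * κ) *
        (∑' j : ℤ, Real.exp (-π * (j : ℝ)^2 / r^2)) := by
  have ha : 0 < 1 / r^2 := by positivity
  have e : ∀ x : ℝ, -π * x^2 / r^2 = -π * (1 / r^2) * x^2 := fun x => by ring
  simp only [e]
  set a := 1 / r^2 with hadef
  have s1 := gtb_summable a ha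
  have s2 := gtb_summable (a / 4) (by positivity)
  set E := Real.exp (-(3 * π / 4) * κ)
  have s3 := s2.mul_left E
  have hE : 0 < E := Real.exp_pos _
  let S : Set ℤ := {j : ℤ | Real.sqrt κ * r < |(j : ℝ)|}
  have step1 : (∑' j : {j : ℤ // Real.sqrt κ * r < |(j : ℝ)|},
      Real.exp (-π * a * ((j : ℤ) : ℝ)^2)) ≤
      ∑' j : {j : ℤ // Real.sqrt κ * r < |(j : ℝ)|},
        E * Real.exp (-π * (a / 4) * ((j : ℤ) : ℝ)^2) := by
    refine (s1.subtype S).tsum_le_tsum (fun j => ?_) (s3.subtype S)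
    obtain ⟨j, hj⟩ := j
    change Real.sqrt κ * r < |(j : ℝ)| at hj
    change Real.exp (-π * a * (j : ℝ)^2) ≤ E * Real.exp (-π * (a / 4) * (j : ℝ)^2)
    rw [← Real.exp_add]
    apply Real.exp_le_exp.2
    have h1 : κ * r^2 ≤ (j : ℝ)^2 := by
      have h := pow_le_pow_left₀ (by positivity) hj.le 2
      rwa [mul_pow, Real.sq_sqrt hκ, sq_abs] at h
    have h2 : κ ≤ a * (j : ℝ)^2 := by
      rw [hadef, one_div_mul_eq_div, le_div_iff₀ (by positivity)]
      exact h1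
    nlinarith [Real.pi_pos]
  have step2 : (∑' j : {j : ℤ // Real.sqrt κ * r < |(j : ℝ)|},
        E * Real.exp (-π * (a / 4) * ((j : ℤ) : ℝ)^2)) ≤
        ∑' j : ℤ, E * Real.exp (-π * (a / 4) * (j : ℝ)^2) :=
    Summable.tsum_subtype_le _ S (fun j => by positivity) s3
  rw [tsum_mul_left (a := E) (f := fun j : ℤ => Real.exp (-π * (a / 4) * (j : ℝ)^2))] at step2
  have step3 := mul_le_mul_of_nonneg_left (gtb_double a ha) hE.le
  calc _ ≤ _ := step1
    _ ≤ _ := step2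
    _ ≤ _ := step3
    _ = _ := by ring
end

section
/- Let n ≥ 1, let L be a full-rank lattice in ℝⁿ (a discrete additive subgroup of ℝⁿ whose ℝ-linear span is all of ℝⁿ), let u ∈ ℝⁿ and let r > 0. Then ∑_{x∈L, ‖x+u‖ > √n·r} exp(−π‖x+u‖²/r²) ≤ 2^{−n} · ∑_{x∈L} exp(−π‖x‖²/r²), where ‖·‖ is the Euclidean norm. -/
open Real

namespace Banasz

variable {E : Type*} [NormedAddCommGroup E] [InnerProductSpace ℝ E]

/-- Gaussian mass of a shifted lattice. -/
noncomputable def G (L : Submodule ℤ E) (a : ℝ) (u : E) : ℝ :=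
  ∑' x : L, Real.exp (-a * ‖(x : E) + u‖ ^ 2)

theorem summable_gauss [FiniteDimensional ℝ E] (L : Submodule ℤ E) [DiscreteTopology L]
    {a : ℝ} (ha : 0 < a) (u : E) :
    Summable (fun x : L => Real.exp (-a * ‖(x : E) + u‖ ^ 2)) := by
  set m := Module.finrank ℤ L + 1 with hm
  have hs := ZLattice.summable_norm_sub_inv_pow L (2 * m) (by omega) (-u)
  refine Summable.of_norm_bounded_eventually (hs.mul_left ((m.factorial : ℝ) / a ^ m)) ?_
  have hfin : {x : L | (x : E) + u = 0}.Finite := by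
    refine Set.Subsingleton.finite ?_
    intro x hx y hy
    apply Subtype.ext
    exact add_right_cancel (hx.trans hy.symm)
  filter_upwards [hfin.compl_mem_cofinite] with x hx
  have hx' : (x : E) + u ≠ 0 := hx
  have ht : 0 < ‖(x : E) + u‖ := norm_pos_iff.2 hx'
  rw [sub_neg_eq_add]
  generalize ‖(x : E) + u‖ = t at ht
  rw [Real.norm_of_nonneg (Real.exp_pos _).le, neg_mul, Real.exp_neg]
  have h1 := Real.pow_div_factorial_le_exp (x := a * t ^ 2) (by positivity) m
  have hf : (0 : ℝ) < m.factorial := by exact_mod_cast m.factorial_pos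
  calc (Real.exp (a * t ^ 2))⁻¹ ≤ ((a * t ^ 2) ^ m / m.factorial)⁻¹ := by
        apply inv_anti₀ (by positivity) h1
    _ = _ := by
        rw [mul_pow, ← pow_mul, inv_pow]
        field_simp

theorem G_pos [FiniteDimensional ℝ E] (L : Submodule ℤ E) [DiscreteTopology L]
    {a : ℝ} (ha : 0 < a) (u : E) : 0 < G L a u :=
  (summable_gauss L ha u).tsum_pos (fun _ => (Real.exp_pos _).le) 0 (Real.exp_pos _)

theorem G_periodic (L : Submodule ℤ E) (a : ℝ) (u : E) (y : L) :
    G L a (y + u) = G L a u := by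
  unfold G
  rw [← (Equiv.addRight y).tsum_eq (fun x : L => Real.exp (-a * ‖(x : E) + u‖ ^ 2))]
  simp [add_assoc]

theorem G_bdd [FiniteDimensional ℝ E] (L : Submodule ℤ E) [DiscreteTopology L] [IsZLattice ℝ L]
    {n : ℕ} (b : Module.Basis (Fin n) ℤ L)
    {a : ℝ} (ha : 0 < a) : BddAbove (Set.range (G L a)) := by
  let B := b.ofZLatticeBasis ℝ L
  set R := ∑ i, ‖B i‖
  refine ⟨Real.exp (a * R ^ 2) * G L (a / 2) 0, ?_⟩
  rintro _ ⟨u, rfl⟩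
  have hmem : ((ZSpan.floor B u : Submodule.span ℤ (Set.range B)) : E) ∈ L := by
    have h := b.ofZLatticeBasis_span ℝ
    exact h.le (ZSpan.floor B u).2
  have h1 : G L a u = G L a (ZSpan.fract B u) := by
    rw [← G_periodic L a (ZSpan.fract B u) ⟨_, hmem⟩]
    simp [ZSpan.fract]
  rw [h1]
  have hR := ZSpan.norm_fract_le B u
  generalize ZSpan.fract B u = v at hR
  unfold G
  rw [← tsum_mul_left]
  refine (summable_gauss L ha v).tsum_le_tsum ?_ ((summable_gauss L (half_pos ha) 0).mul_left _)
  intro x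
  rw [← Real.exp_add, Real.exp_le_exp, add_zero]
  have h2 : ‖(x : E)‖ ≤ ‖(x : E) + v‖ + ‖v‖ := by
    simpa using norm_sub_le ((x : E) + v) v
  have h3 : ‖(x : E)‖ ^ 2 ≤ 2 * ‖(x : E) + v‖ ^ 2 + 2 * R ^ 2 := by
    have : ‖(x : E)‖ ≤ ‖(x : E) + v‖ + R := h2.trans (by gcongr)
    nlinarith [norm_nonneg (x : E), sq_nonneg (‖(x : E) + v‖ - R)]
  nlinarith

section abstract_part

variable {C : Type*} [Fintype C]

theorem pair_bij (L : Submodule ℤ E) (rep : C → L)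
    (H : Function.Bijective (fun p : L × C => p.1 + p.1 + rep p.2)) :
    Function.Bijective (fun p : C × (L × L) => (p.2.1 + p.2.2 + rep p.1, p.2.1 - p.2.2)) := by
  constructor
  · rintro ⟨c, p, q⟩ ⟨c', p', q'⟩ h
    simp only [Prod.mk.injEq] at h
    obtain ⟨h1, h2⟩ := h
    have h3 : q + q + rep c = q' + q' + rep c' := by
      have e1 : q + q + rep c = (p + q + rep c) - (p - q) := by abel
      have e2 : q' + q' + rep c' = (p' + q' + rep c') - (p' - q') := by abel
      rw [e1, e2, h1, h2]
    have h4 := @H.1 (q, c) (q', c') h3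
    simp only [Prod.mk.injEq] at h4
    obtain ⟨rfl, rfl⟩ := h4
    have : p = p' := sub_left_injective h2
    rw [this]
  · rintro ⟨x, y⟩
    obtain ⟨⟨q, c⟩, h⟩ := H.2 (x - y)
    refine ⟨(c, (y + q, q)), ?_⟩
    simp only [Prod.mk.injEq] at h ⊢
    constructor
    · have : y + q + q + rep c = y + (q + q + rep c) := by abel
      rw [this, h]; abel
    · abel

variable [FiniteDimensional ℝ E]

set_option maxHeartbeats 2000000 in
theorem G_mul (L : Submodule ℤ E) [DiscreteTopology L] (rep : C → L)
    (H : Function.Bijective (fun p : L × C => p.1 + p.1 + rep p.2))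
    {a : ℝ} (ha : 0 < a) (u v : E) :
    G L a u * G L a v = ∑ c, G L (2 * a) ((1 / 2 : ℝ) • (rep c + u + v)) *
      G L (2 * a) ((1 / 2 : ℝ) • (rep c + u - v)) := by
  have ha2 : 0 < 2 * a := by linarith
  have key : ∀ (c : C) (p q : L),
      Real.exp (-a * ‖((p + q + rep c : L) : E) + u‖ ^ 2) *
        Real.exp (-a * ‖((p - q : L) : E) + v‖ ^ 2) =
      Real.exp (-(2 * a) * ‖(p : E) + (1 / 2 : ℝ) • (rep c + u + v)‖ ^ 2) *
        Real.exp (-(2 * a) * ‖(q : E) + (1 / 2 : ℝ) • (rep c + u - v)‖ ^ 2) := by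
    intro c p q
    rw [← Real.exp_add, ← Real.exp_add]
    congr 1
    have e1 : ((p + q + rep c : L) : E) + u = ((p : E) + (1 / 2 : ℝ) • (rep c + u + v)) +
      ((q : E) + (1 / 2 : ℝ) • (rep c + u - v)) := by
      push_cast; module
    have e2 : ((p - q : L) : E) + v = ((p : E) + (1 / 2 : ℝ) • (rep c + u + v)) -
      ((q : E) + (1 / 2 : ℝ) • (rep c + u - v)) := by
      push_cast; module
    rw [e1, e2]
    have := parallelogram_law_with_norm ℝ ((p : E) + (1 / 2 : ℝ) • (rep c + u + v))
      ((q : E) + (1 / 2 : ℝ) • (rep c + u - v))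
    linear_combination (-a) * this
  have hsum := (summable_gauss L ha u).mul_of_nonneg (summable_gauss L ha v)
    (fun _ => (Real.exp_pos _).le) (fun _ => (Real.exp_pos _).le)
  unfold G
  rw [(summable_gauss L ha u).tsum_mul_tsum (summable_gauss L ha v) hsum]
  let e := Equiv.ofBijective _ (pair_bij L rep H)
  have hsum' := e.summable_iff.2 hsum
  rw [← e.tsum_eq]
  have hsum'' : Summable (fun p : C × (L × L) =>
      Real.exp (-(2 * a) * ‖(p.2.1 : E) + (1 / 2 : ℝ) • (rep p.1 + u + v)‖ ^ 2) *
        Real.exp (-(2 * a) * ‖(p.2.2 : E) + (1 / 2 : ℝ) • (rep p.1 + u - v)‖ ^ 2)) := by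
    refine hsum'.congr ?_
    rintro ⟨c, p, q⟩
    exact (key c p q)
  rw [tsum_congr (g := (fun p : C × (L × L) =>
      Real.exp (-(2 * a) * ‖(p.2.1 : E) + (1 / 2 : ℝ) • (rep p.1 + u + v)‖ ^ 2) *
        Real.exp (-(2 * a) * ‖(p.2.2 : E) + (1 / 2 : ℝ) • (rep p.1 + u - v)‖ ^ 2)))
      (fun ⟨c, p, q⟩ => key c p q)]
  rw [hsum''.tsum_prod, tsum_fintype]
  refine Finset.sum_congr rfl fun c _ => ?_
  have s1 := summable_gauss L ha2 ((1 / 2 : ℝ) • (rep c + u + v))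
  have s2 := summable_gauss L ha2 ((1 / 2 : ℝ) • (rep c + u - v))
  rw [s1.tsum_mul_tsum s2 (s1.mul_of_nonneg s2
    (fun _ => (Real.exp_pos _).le) (fun _ => (Real.exp_pos _).le))]

theorem G_split (L : Submodule ℤ E) [DiscreteTopology L] (rep : C → L)
    (H : Function.Bijective (fun p : L × C => p.1 + p.1 + rep p.2))
    {a : ℝ} (ha : 0 < a) (u : E) :
    G L a u = ∑ c, G L (4 * a) ((1 / 2 : ℝ) • (rep c + u)) := by
  let e := (Equiv.prodComm C L).trans (Equiv.ofBijective _ H)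
  have hs := e.summable_iff.2 (summable_gauss L ha u)
  unfold G
  rw [← e.tsum_eq]
  refine (hs.tsum_prod (f := fun p : C × L => _)).trans ?_
  rw [tsum_fintype]
  refine Finset.sum_congr rfl fun c _ => tsum_congr fun x => ?_
  have e1 : ((e (c, x) : L) : E) + u = (2 : ℝ) • ((x : E) + (1 / 2 : ℝ) • (rep c + u)) := by
    have : e (c, x) = x + x + rep c := rfl
    rw [this]; push_cast; module
  simp only [Function.comp]
  rw [e1, norm_smul]
  congr 1
  norm_num
  ring

theorem G_four (L : Submodule ℤ E) [DiscreteTopology L] (rep : C → L)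
    (H : Function.Bijective (fun p : L × C => p.1 + p.1 + rep p.2))
    {a : ℝ} (ha : 0 < a) (u : E) :
    G L a u ^ 4 ≤ G L a (u + u) * G L a 0 ^ 3 := by
  have h1 := G_mul L rep H ha u u
  have h2 := G_mul L rep H ha (u + u) 0
  have h3 := G_mul L rep H ha 0 0
  simp only [add_zero, sub_zero, add_sub_cancel_right, ← add_assoc] at h1 h2 h3
  simp only [← sq] at h2 h3
  have cs := Finset.sum_mul_sq_le_sq_mul_sq Finset.univ
    (fun c => G L (2 * a) ((1 / 2 : ℝ) • (rep c + u + u)))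
    (fun c => G L (2 * a) ((1 / 2 : ℝ) • (rep c : E)))
  rw [← h1, ← h2, ← h3] at cs
  nlinarith [cs]

theorem G_le_zero (L : Submodule ℤ E) [DiscreteTopology L] [IsZLattice ℝ L]
    {n : ℕ} (b : Module.Basis (Fin n) ℤ L) (rep : C → L)
    (H : Function.Bijective (fun p : L × C => p.1 + p.1 + rep p.2))
    {a : ℝ} (ha : 0 < a) (u : E) : G L a u ≤ G L a 0 := by
  have hb := G_bdd L b ha
  set M := sSup (Set.range (G L a)) with hM
  have hle : ∀ v, G L a v ≤ M := fun v => le_csSup hb ⟨v, rfl⟩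
  have h0 := G_pos L ha 0
  have hM0 : 0 < M := h0.trans_le (hle 0)
  refine (hle u).trans ?_
  by_contra! hlt
  have hlt3 : G L a 0 ^ 3 < M ^ 3 := by gcongr
  have hall : ∀ v, G L a v ^ 4 ≤ M * G L a 0 ^ 3 := fun v =>
    (G_four L rep H ha v).trans (by gcongr; exact hle _)
  have hM4 : M ^ 4 ≤ M * G L a 0 ^ 3 := by
    set K := M * G L a 0 ^ 3 with hK
    have hK0 : 0 ≤ K := by positivity
    have hroot : ∀ v, G L a v ≤ Real.sqrt (Real.sqrt K) := fun v => by
      apply Real.le_sqrt_of_sq_le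
      apply Real.le_sqrt_of_sq_le
      rw [← pow_mul]
      exact hall v
    have hsup : M ≤ Real.sqrt (Real.sqrt K) :=
      csSup_le (Set.range_nonempty _) (by rintro _ ⟨v, rfl⟩; exact hroot v)
    calc M ^ 4 ≤ Real.sqrt (Real.sqrt K) ^ 4 := by gcongr
      _ = (Real.sqrt (Real.sqrt K) ^ 2) ^ 2 := by ring
      _ = K := by rw [Real.sq_sqrt (Real.sqrt_nonneg _), Real.sq_sqrt hK0]
  nlinarith

end abstract_part

theorem exists_rep {M : Type*} [AddCommGroup M] {n : ℕ} (b : Module.Basis (Fin n) ℤ M) :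
    ∃ rep : (Fin n → Fin 2) → M,
      Function.Bijective (fun p : M × (Fin n → Fin 2) => p.1 + p.1 + rep p.2) := by
  refine ⟨fun c => b.equivFun.symm (fun i => ((c i : ℕ) : ℤ)), ?_, ?_⟩
  · rintro ⟨x, c⟩ ⟨y, d⟩ h
    have h' := congrArg b.equivFun h
    simp only [map_add, LinearEquiv.apply_symm_apply] at h'
    have hi : ∀ i, c i = d i ∧ b.equivFun x i = b.equivFun y i := by
      intro i
      have := congrFun h' i
      simp only [Pi.add_apply] at this
      have h1 := (c i).2
      have h2 := (d i).2
      constructor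
      · apply Fin.ext; omega
      · omega
    rw [Prod.mk.injEq]
    exact ⟨b.equivFun.injective (funext fun i => (hi i).2), funext fun i => (hi i).1⟩
  · intro x
    refine ⟨(b.equivFun.symm (fun i => b.equivFun x i / 2),
      fun i => ⟨(b.equivFun x i % 2).toNat, by omega⟩), ?_⟩
    apply b.equivFun.injective
    simp only [map_add, LinearEquiv.apply_symm_apply]
    funext i
    simp only [Pi.add_apply]
    omega

theorem num_bound : Real.exp (-(π * (3 / 4))) ≤ 1 / 4 := by
  have h1 : (9 / 4 : ℝ) ≤ π * (3 / 4) := by nlinarith [Real.pi_gt_three]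
  have h2 : Real.exp (-(π * (3 / 4))) ≤ Real.exp (-2) := Real.exp_le_exp.2 (by linarith)
  refine h2.trans ?_
  have h3 : (2 : ℝ) ≤ Real.exp 1 := by linarith [Real.add_one_le_exp (1 : ℝ)]
  have h4 : Real.exp 2 = Real.exp 1 * Real.exp 1 := by rw [← Real.exp_add]; norm_num
  rw [Real.exp_neg, one_div]
  exact inv_anti₀ (by norm_num) (by nlinarith)

theorem main (n : ℕ) (L : Submodule ℤ (EuclideanSpace ℝ (Fin n))) [DiscreteTopology L]
    (hL : Submodule.span ℝ (L : Set (EuclideanSpace ℝ (Fin n))) = ⊤)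
    (u : EuclideanSpace ℝ (Fin n)) (r : ℝ) (hr : 0 < r) :
    (∑' x : {v : L // Real.sqrt n * r < ‖(v : EuclideanSpace ℝ (Fin n)) + u‖},
        Real.exp (-π * ‖((x : L) : EuclideanSpace ℝ (Fin n)) + u‖^2 / r^2))
      ≤ (2 : ℝ)^(-(n : ℤ)) *
        (∑' x : L, Real.exp (-π * ‖(x : EuclideanSpace ℝ (Fin n))‖^2 / r^2)) := by
  have : IsZLattice ℝ L := ⟨hL⟩
  have hrank : Module.finrank ℤ L = n := by rw [ZLattice.rank ℝ L]; simp
  let b : Module.Basis (Fin n) ℤ L := Module.finBasisOfFinrankEq ℤ L hrank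
  obtain ⟨rep, H⟩ := exists_rep b
  set a := π / r ^ 2 with ha'
  have ha : 0 < a := by positivity
  have ha4 : 0 < a / 4 := by positivity
  have hG : (∑' x : L, Real.exp (-π * ‖(x : EuclideanSpace ℝ (Fin n))‖^2 / r^2)) = G L a 0 := by
    unfold G
    refine tsum_congr fun x => ?_
    rw [add_zero, ha']; congr 1; ring
  have hsplit : G L (a / 4) u ≤ 2 ^ n * G L a 0 := by
    rw [G_split L rep H ha4 u]
    refine (Finset.sum_le_sum fun c _ => ?_).trans_eq
      (b := ∑ c : Fin n → Fin 2, G L a 0) ?_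
    · rw [mul_div_cancel₀ a (by norm_num : (4 : ℝ) ≠ 0)]
      exact G_le_zero L b rep H ha _
    · simp
  have htail : (∑' x : {v : L // Real.sqrt n * r < ‖(v : EuclideanSpace ℝ (Fin n)) + u‖},
        Real.exp (-π * ‖((x : L) : EuclideanSpace ℝ (Fin n)) + u‖^2 / r^2)) ≤
      (1 / 4) ^ n * G L (a / 4) u := by
    have hs1 := summable_gauss L ha u
    have hs4 := (summable_gauss L ha4 u).mul_left ((1 / 4 : ℝ) ^ n)
    have step1 : (∑' x : {v : L // Real.sqrt n * r < ‖(v : EuclideanSpace ℝ (Fin n)) + u‖},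
        Real.exp (-π * ‖((x : L) : EuclideanSpace ℝ (Fin n)) + u‖^2 / r^2)) ≤
        ∑' x : {v : L // Real.sqrt n * r < ‖(v : EuclideanSpace ℝ (Fin n)) + u‖},
        (1 / 4 : ℝ) ^ n * Real.exp (-(a / 4) *
          ‖((x : L) : EuclideanSpace ℝ (Fin n)) + u‖^2) := by
      refine Summable.tsum_le_tsum ?_ ?_ (hs4.comp_injective Subtype.val_injective)
      · rintro ⟨x, hx⟩
        simp only
        generalize ‖(x : EuclideanSpace ℝ (Fin n)) + u‖ = t at hx
        have ht2 : n * r ^ 2 ≤ t ^ 2 := by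
          have h0 : 0 ≤ Real.sqrt n * r := by positivity
          have := pow_le_pow_left₀ h0 hx.le 2
          rwa [mul_pow, Real.sq_sqrt (Nat.cast_nonneg n)] at this
        have hexp : -π * t ^ 2 / r ^ 2 ≤ n * (-(π * (3 / 4))) + -(a / 4) * t ^ 2 := by
          have h5 : (n : ℝ) ≤ t ^ 2 / r ^ 2 := (le_div_iff₀ (by positivity)).2 ht2
          have e1 : -π * t ^ 2 / r ^ 2 = -π * (t ^ 2 / r ^ 2) := by ring
          have e2 : -(a / 4) * t ^ 2 = -(π / 4) * (t ^ 2 / r ^ 2) := by rw [ha']; ring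
          rw [e1, e2]
          nlinarith [Real.pi_pos]
        refine (Real.exp_le_exp.2 hexp).trans ?_
        rw [Real.exp_add, Real.exp_nat_mul]
        gcongr
        exact num_bound
      · refine (hs1.comp_injective
          (i := fun x : {v : L // Real.sqrt n * r < ‖(v : EuclideanSpace ℝ (Fin n)) + u‖} =>
            (x : L)) Subtype.val_injective).congr fun x => ?_
        simp only [Function.comp]
        rw [ha']; congr 1; ring
    refine step1.trans ?_
    unfold G
    rw [← tsum_mul_left]
    exact hs4.tsum_subtype_le (fun x : L => (1 / 4 : ℝ) ^ n * Real.exp (-(a / 4) *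
          ‖(x : EuclideanSpace ℝ (Fin n)) + u‖^2))
          {v : L | Real.sqrt n * r < ‖(v : EuclideanSpace ℝ (Fin n)) + u‖}
          (fun x => by positivity)
  rw [hG]
  refine htail.trans ?_
  calc (1 / 4 : ℝ) ^ n * G L (a / 4) u ≤ (1 / 4 : ℝ) ^ n * (2 ^ n * G L a 0) := by gcongr
    _ = (2 : ℝ) ^ (-(n : ℤ)) * G L a 0 := by
      rw [← mul_assoc, ← mul_pow, zpow_neg, zpow_natCast, ← inv_pow]
      norm_num

end Banasz

/-- **Banaszczyk's tail bound** (paper's Lemma 2.2, with the implicit constant `2^{-n}`).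
For a full-rank lattice `L ⊆ ℝⁿ`, any shift `u` and any `r > 0`,
`∑_{x ∈ L, ‖x+u‖ > √n r} exp(−π‖x+u‖²/r²) ≤ 2^{-n} ∑_{x ∈ L} exp(−π‖x‖²/r²)`. -/
theorem banaszczyk_tail_bound (n : ℕ) (hn : 1 ≤ n)
    (L : AddSubgroup (EuclideanSpace ℝ (Fin n))) [DiscreteTopology L]
    (hL : Submodule.span ℝ (L : Set (EuclideanSpace ℝ (Fin n))) = ⊤)
    (u : EuclideanSpace ℝ (Fin n)) (r : ℝ) (hr : 0 < r) :
    (∑' x : {v : L // Real.sqrt n * r < ‖(v : EuclideanSpace ℝ (Fin n)) + u‖},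
        Real.exp (-π * ‖((x : L) : EuclideanSpace ℝ (Fin n)) + u‖^2 / r^2))
      ≤ (2 : ℝ)^(-(n : ℤ)) *
        (∑' x : L, Real.exp (-π * ‖(x : EuclideanSpace ℝ (Fin n))‖^2 / r^2)) := by
  have : DiscreteTopology (AddSubgroup.toIntSubmodule L) := ‹DiscreteTopology L›
  exact Banasz.main n (AddSubgroup.toIntSubmodule L) hL u r hr
end

section
/- Let q be a prime, let m, n ≥ 1 be integers, and let B be a real number with 0 ≤ B < q/2. For A drawn uniformly at random from the set of m×n matrices over ℤ/qℤ, the probability that the q-ary lattice Λ_q(A) contains a nonzero vector y with ‖y‖_∞ ≤ B is at most q^{n−m}·(2B+1)^m. -/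
/-- **Minimum of a random q-ary lattice in ℓ∞ norm** (precise form of the first claim of
the paper's Lemma 2.7). For a uniform `A ∈ (ℤ/qℤ)^{m×n}`, the probability that the q-ary
lattice `Λ_q(A) = {y ∈ ℤ^m : y ≡ Ax (mod q) for some x}` contains a nonzero vector `y`
with `‖y‖_∞ ≤ B` is at most `q^{n−m} (2B+1)^m`, whenever `0 ≤ B < q/2`. -/
theorem qary_lattice_linf_min (q m n : ℕ) (hq : q.Prime) (hm : 1 ≤ m) (hn : 1 ≤ n)
    (B : ℝ) (hB0 : 0 ≤ B) (hBq : B < (q : ℝ) / 2) :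
    ((Nat.card {A : Matrix (Fin m) (Fin n) (ZMod q) //
        ∃ y : Fin m → ℤ, y ≠ 0 ∧ (∀ i, |(y i : ℝ)| ≤ B) ∧
          ∃ x : Fin n → ZMod q, (fun i => (y i : ZMod q)) = A.mulVec x} : ℝ)
        / (Nat.card (Matrix (Fin m) (Fin n) (ZMod q)) : ℝ))
      ≤ (q : ℝ)^n / (q : ℝ)^m * (2 * B + 1)^m := by
  classical
  haveI : Fact q.Prime := ⟨hq⟩
  haveI : NeZero q := ⟨hq.ne_zero⟩
  have hqpos : (0 : ℝ) < q := by exact_mod_cast hq.pos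
  set Bad := {A : Matrix (Fin m) (Fin n) (ZMod q) //
        ∃ y : Fin m → ℤ, y ≠ 0 ∧ (∀ i, |(y i : ℝ)| ≤ B) ∧
          ∃ x : Fin n → ZMod q, (fun i => (y i : ZMod q)) = A.mulVec x} with hBad
  have key : ∀ A : Bad, ∃ (y : Fin m → Finset.Icc (-⌊B⌋) ⌊B⌋) (x : Fin n → ZMod q),
      (∃ j, x j ≠ 0) ∧ (fun i => (((y i : ℤ)) : ZMod q)) = A.1.mulVec x := by
    rintro ⟨A, y, hy0, hyB, x, hx⟩
    refine ⟨fun i => ⟨y i, ?_⟩, x, ?_, hx⟩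
    · have h := abs_le.1 (hyB i)
      rw [Finset.mem_Icc]
      constructor
      · have : -(y i) ≤ ⌊B⌋ := Int.le_floor.2 (by push_cast; linarith [h.1])
        linarith
      · exact Int.le_floor.2 h.2
    · by_contra! hx0
      apply hy0
      have hx0' : x = 0 := funext hx0
      subst hx0'
      funext i
      have hi := congrFun hx i
      simp only [Matrix.mulVec_zero, Pi.zero_apply] at hi
      have hd : (q : ℤ) ∣ y i := (ZMod.intCast_zmod_eq_zero_iff_dvd _ _).1 hi
      have hlt : |y i| < (q : ℤ) := by
        have h1 : |(y i : ℝ)| < q := by linarith [hyB i]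
        exact_mod_cast h1
      exact Int.eq_zero_of_abs_lt_dvd hd hlt
  choose Y X hj hXY using key
  have hj' : ∀ x : Fin n → ZMod q, ∃ j, (∃ j, x j ≠ 0) → x j ≠ 0 := by
    intro x
    by_cases h : ∃ j, x j ≠ 0
    · obtain ⟨j, h⟩ := h
      exact ⟨j, fun _ => h⟩
    · exact ⟨⟨0, hn⟩, fun h' => absurd h' h⟩
  choose J hJ using hj'
  let f : Bad × (Fin m → ZMod q) →
      Matrix (Fin m) (Fin n) (ZMod q) × (Fin n → ZMod q) × (Fin m → Finset.Icc (-⌊B⌋) ⌊B⌋) :=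
    fun p => (p.1.1 + Matrix.vecMulVec p.2 (Pi.single (J (X p.1)) 1), X p.1, Y p.1)
  have hf : Function.Injective f := by
    rintro ⟨A, v⟩ ⟨A', v'⟩ h
    simp only [f, Prod.mk.injEq] at h
    obtain ⟨h1, h2, h3⟩ := h
    have hv : v = v' := by
      have h4 := congrArg (fun M => Matrix.mulVec M (X A)) h1
      simp only [Matrix.add_mulVec] at h4
      rw [← hXY A] at h4
      nth_rewrite 4 [h2] at h4
      rw [← h2] at h4
      have h5 : A'.1.mulVec (X A) = fun i => (((Y A i : ℤ)) : ZMod q) := by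
        rw [h2, h3, hXY A']
      rw [h5] at h4
      have h6 := add_left_cancel h4
      funext i
      have h7 := congrFun h6 i
      simp [Matrix.vecMulVec_mulVec] at h7
      exact h7.resolve_right (hJ _ (hj A))
    subst hv
    rw [h2] at h1
    have h8 := add_right_cancel h1
    rw [Subtype.ext h8]
  have hc := Nat.card_le_card_of_injective f hf
  have hfl : (0 : ℤ) ≤ ⌊B⌋ := Int.floor_nonneg.2 hB0
  have hbox : ((Nat.card (Fin m → Finset.Icc (-⌊B⌋) ⌊B⌋) : ℕ) : ℝ) ≤ (2 * B + 1) ^ m := by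
    have h0 : ((Nat.card (Finset.Icc (-⌊B⌋) ⌊B⌋) : ℕ) : ℝ) ≤ 2 * B + 1 := by
      rw [Nat.card_eq_fintype_card, Fintype.card_coe, Int.card_Icc]
      have h1 : (((⌊B⌋ + 1 - -⌊B⌋).toNat : ℤ)) = 2 * ⌊B⌋ + 1 := by omega
      have h2 : (((⌊B⌋ + 1 - -⌊B⌋).toNat : ℝ)) = 2 * ⌊B⌋ + 1 := by exact_mod_cast h1
      rw [h2]
      linarith [Int.floor_le B]
    rw [Nat.card_fun, Nat.card_fin]
    push_cast
    exact pow_le_pow_left₀ (Nat.cast_nonneg _) h0 m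
  rw [Nat.card_prod, Nat.card_prod, Nat.card_prod] at hc
  have hF : ∀ k : ℕ, Nat.card (Fin k → ZMod q) = q ^ k := by
    intro k
    rw [Nat.card_fun, Nat.card_fin, Nat.card_zmod]
  rw [hF, hF] at hc
  have hc' : (Nat.card Bad : ℝ) * (q : ℝ) ^ m ≤
      (Nat.card (Matrix (Fin m) (Fin n) (ZMod q)) : ℝ) * ((q : ℝ) ^ n *
        (Nat.card (Fin m → Finset.Icc (-⌊B⌋) ⌊B⌋) : ℝ)) := by exact_mod_cast hc
  have hM : (0 : ℝ) < Nat.card (Matrix (Fin m) (Fin n) (ZMod q)) := by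
    exact_mod_cast Nat.card_pos
  rw [div_le_iff₀ hM, div_mul_eq_mul_div, div_mul_eq_mul_div, le_div_iff₀ (by positivity)]
  refine hc'.trans ?_
  rw [mul_comm]
  gcongr
end

section
/- Let q be a prime, let m, n ≥ 1 be integers, and let B be a real number with 0 ≤ B < q/2. For A drawn uniformly at random from the set of m×n matrices over ℤ/qℤ, the probability that the q-ary lattice Λ_q(A) contains a nonzero vector y with Euclidean norm ‖y‖₂ ≤ B is at most q^{n−m} · #{y ∈ ℤ^m : y ≠ 0, ‖y‖₂ ≤ B}. -/
lemma qary_abs_lt (q m : ℕ) (B : ℝ) (hBq : B < (q : ℝ) / 2) (y : Fin m → ℤ)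
    (h : Real.sqrt (∑ i, ((y i : ℝ))^2) ≤ B) (i : Fin m) : |y i| < (q : ℤ) := by
  have h1 : |(y i : ℝ)| ≤ Real.sqrt (∑ i, ((y i : ℝ))^2) := by
    apply Real.abs_le_sqrt
    exact Finset.single_le_sum (f := fun i => ((y i : ℝ))^2) (fun j _ => sq_nonneg _)
      (Finset.mem_univ i)
  have hq : (0 : ℝ) ≤ q := Nat.cast_nonneg q
  have h2 : |(y i : ℝ)| < q := by linarith
  exact_mod_cast h2

/-- **Minimum of a random q-ary lattice in Euclidean norm** (probabilistic core of the
paper's Lemma 2.8). For a uniform `A ∈ (ℤ/qℤ)^{m×n}`, the probability that `Λ_q(A)`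
contains a nonzero vector of Euclidean norm at most `B < q/2` is at most
`q^{n−m} · #{y ∈ ℤ^m : y ≠ 0, ‖y‖₂ ≤ B}`. -/
theorem qary_lattice_l2_min (q m n : ℕ) (hq : q.Prime) (hm : 1 ≤ m) (hn : 1 ≤ n)
    (B : ℝ) (hB0 : 0 ≤ B) (hBq : B < (q : ℝ) / 2) :
    ((Nat.card {A : Matrix (Fin m) (Fin n) (ZMod q) //
        ∃ y : Fin m → ℤ, y ≠ 0 ∧ Real.sqrt (∑ i, ((y i : ℝ))^2) ≤ B ∧
          ∃ x : Fin n → ZMod q, (fun i => (y i : ZMod q)) = A.mulVec x} : ℝ)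
        / (Nat.card (Matrix (Fin m) (Fin n) (ZMod q)) : ℝ))
      ≤ (q : ℝ)^n / (q : ℝ)^m *
        (Nat.card {y : Fin m → ℤ // y ≠ 0 ∧ Real.sqrt (∑ i, ((y i : ℝ))^2) ≤ B} : ℝ) := by
  haveI : Fact q.Prime := ⟨hq⟩
  set Y := {y : Fin m → ℤ // y ≠ 0 ∧ Real.sqrt (∑ i, ((y i : ℝ))^2) ≤ B} with hY
  set S := {A : Matrix (Fin m) (Fin n) (ZMod q) //
        ∃ y : Fin m → ℤ, y ≠ 0 ∧ Real.sqrt (∑ i, ((y i : ℝ))^2) ≤ B ∧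
          ∃ x : Fin n → ZMod q, (fun i => (y i : ZMod q)) = A.mulVec x} with hS
  haveI : Finite Y := by
    have hfin : Set.Finite {y : Fin m → ℤ | y ≠ 0 ∧ Real.sqrt (∑ i, ((y i : ℝ))^2) ≤ B} := by
      apply (Set.finite_Icc (fun _ : Fin m => -(q : ℤ)) (fun _ => (q : ℤ))).subset
      rintro y ⟨-, hy⟩
      exact ⟨fun i => (abs_lt.1 (qary_abs_lt q m B hBq y hy i)).1.le,
        fun i => (abs_lt.1 (qary_abs_lt q m B hBq y hy i)).2.le⟩
    exact hfin
  have key : ∀ A : S, ∃ (y : Y) (x u : Fin n → ZMod q),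
      (fun i => (y.1 i : ZMod q)) = A.1.mulVec x ∧ u ⬝ᵥ x = 1 := by
    rintro ⟨A, y, hy0, hyB, x, hx⟩
    have hx0 : x ≠ 0 := by
      rintro rfl
      apply hy0
      funext i
      have h1 := congrFun hx i
      simp only [Matrix.mulVec_zero, Pi.zero_apply] at h1
      rw [ZMod.intCast_zmod_eq_zero_iff_dvd] at h1
      exact Int.eq_zero_of_abs_lt_dvd h1 (qary_abs_lt q m B hBq y hyB i)
    obtain ⟨j, hj⟩ := Function.ne_iff.1 hx0
    refine ⟨⟨y, hy0, hyB⟩, x, Pi.single j (x j)⁻¹, hx, ?_⟩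
    rw [single_dotProduct]
    exact inv_mul_cancel₀ hj
  choose fy fx fu hfx hfu using key
  have key2 : ∀ x : Fin n → ZMod q, ∃ u : Fin n → ZMod q, (∃ u, u ⬝ᵥ x = 1) → u ⬝ᵥ x = 1 := by
    intro x
    by_cases h : ∃ u, u ⬝ᵥ x = 1
    · obtain ⟨u, hu⟩ := h
      exact ⟨u, fun _ => hu⟩
    · exact ⟨0, fun h' => absurd h' h⟩
  choose U hU using key2
  have hU' : ∀ A : S, U (fx A) ⬝ᵥ fx A = 1 := fun A => hU _ ⟨fu A, hfu A⟩
  let F : S × (Fin m → ZMod q) → Y × (Fin n → ZMod q) × Matrix (Fin m) (Fin n) (ZMod q) :=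
    fun p => (fy p.1, fx p.1, p.1.1 + Matrix.vecMulVec p.2 (U (fx p.1)))
  have hmul : ∀ p : S × (Fin m → ZMod q),
      (p.1.1 + Matrix.vecMulVec p.2 (U (fx p.1))).mulVec (fx p.1)
        = (fun i => ((fy p.1).1 i : ZMod q)) + p.2 := by
    intro p
    rw [Matrix.add_mulVec, ← hfx, Matrix.vecMulVec_mulVec, hU']
    simp
  have hF : Function.Injective F := by
    rintro ⟨A, w⟩ ⟨A', w'⟩ h
    simp only [F, Prod.mk.injEq] at h
    obtain ⟨h1, h2, h3⟩ := h
    have e1 := hmul (A, w)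
    have e2 := hmul (A', w')
    simp only at e1 e2
    rw [h3, h2, e2, h1] at e1
    have hw : w' = w := add_left_cancel e1
    subst hw
    rw [h2] at h3
    have hA : A.1 = A'.1 := add_right_cancel h3
    rw [Subtype.ext hA]
  have hcard := Nat.card_le_card_of_injective F hF
  have hq0 : (0 : ℝ) < q := by exact_mod_cast hq.pos
  have hM : (0 : ℝ) < Nat.card (Matrix (Fin m) (Fin n) (ZMod q)) := by
    exact_mod_cast Nat.card_pos
  rw [Nat.card_prod, Nat.card_prod, Nat.card_prod, Nat.card_fun, Nat.card_fun] at hcard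
  simp only [Nat.card_zmod, Nat.card_fin] at hcard
  have hR : (Nat.card S : ℝ) * (q : ℝ)^m ≤
      Nat.card Y * ((q : ℝ)^n * Nat.card (Matrix (Fin m) (Fin n) (ZMod q))) := by
    exact_mod_cast hcard
  rw [div_le_iff₀ hM, div_mul_eq_mul_div, div_mul_eq_mul_div, le_div_iff₀ (pow_pos hq0 m)]
  linarith
end

section
/- Let q, n, m, k, c be positive integers with c ≥ 8, let A ∈ (ℤ/qℤ)^{m×n}, write λ = λ₁^∞(Λ_q(A)) and z = q/c, and assume z ≤ λ/2. Let x ∈ (ℤ/qℤ)ⁿ, let ū ∈ {0,1,…,q−1}^m be the coordinatewise lift of Ax, and let e₁, e₂ ∈ ℝ^m satisfy ‖e₁‖_∞ ≤ λ/(2ck) and ‖e₂‖_∞ ≤ λ/(2ck); set u = ū + e₁ and v = ū + e₂. For w ∈ [0,1)^m define g_w(y) = (⌊(y_i/z − w_i) mod c⌋)_{i=1,…,m}, where t mod c denotes the representative of t in [0,c). Then the Lebesgue measure of {w ∈ [0,1)^m : g_w(u) = g_w(v)} is at least (1 − 1/k)^m. -/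
open MeasureTheory

/-- `y ∈ ℤ^m` belongs to the q-ary lattice `Λ_q(A) = {y : y ≡ Ax (mod q) for some x}`. -/
def inQaryLattice {q m n : ℕ} (A : Matrix (Fin m) (Fin n) (ZMod q)) (y : Fin m → ℤ) : Prop :=
  ∃ x : Fin n → ZMod q, (fun i => (y i : ZMod q)) = A.mulVec x

/-- The ℓ∞ norm of an integer vector, as a real number. -/
def intLinfNorm {m : ℕ} (y : Fin m → ℤ) : ℝ :=
  ((Finset.univ.sup fun i => (y i).natAbs : ℕ) : ℝ)

/-- `λ₁^∞(Λ_q(A))`: the least ℓ∞ norm of a nonzero vector of the q-ary lattice. -/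
noncomputable def lambdaOneInf {q m n : ℕ} (A : Matrix (Fin m) (Fin n) (ZMod q)) : ℝ :=
  sInf {t : ℝ | ∃ y : Fin m → ℤ, y ≠ 0 ∧ inQaryLattice A y ∧ t = intLinfNorm y}

/-- `t mod c`: the representative of the real number `t` modulo `c` lying in `[0, c)`. -/
noncomputable def rmod (t c : ℝ) : ℝ := t - c * ⌊t / c⌋

theorem lambdaOneInf_le {q m n : ℕ} (hq : 1 ≤ q) (hm : 1 ≤ m)
    (A : Matrix (Fin m) (Fin n) (ZMod q)) : lambdaOneInf A ≤ q := by
  have hq0 : (q : ℤ) ≠ 0 := by exact_mod_cast (by omega : q ≠ 0)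
  have hmem : intLinfNorm (fun _ : Fin m => (q : ℤ)) = q := by
    unfold intLinfNorm
    have : (Finset.univ : Finset (Fin m)).Nonempty := ⟨⟨0, hm⟩, Finset.mem_univ _⟩
    rw [Finset.sup_const this]
    simp
  rw [← hmem]
  unfold lambdaOneInf
  apply csInf_le
  · refine ⟨0, ?_⟩
    rintro t ⟨y, -, -, rfl⟩
    exact Nat.cast_nonneg _
  · refine ⟨_, ?_, ⟨0, ?_⟩, rfl⟩
    · intro h
      exact hq0 (congrFun h ⟨0, hm⟩)
    · ext i
      simp

theorem floor_rmod (t : ℝ) (c : ℕ) : ⌊rmod t c⌋ = ⌊t⌋ - c * (⌊t⌋ / (c : ℤ)) := by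
  unfold rmod
  rw [Int.floor_div_natCast]
  have : (c : ℝ) * ((⌊t⌋ / (c : ℤ) : ℤ) : ℝ) = (((c : ℤ) * (⌊t⌋ / (c : ℤ)) : ℤ) : ℝ) := by
    push_cast; rfl
  rw [this, Int.floor_sub_intCast]

theorem one_dim_aux (a b d : ℝ) (hab : a ≤ b) (hd : b - a ≤ d) :
    ENNReal.ofReal (1 - d) ≤ volume {w : ℝ | w ∈ Set.Ico (0 : ℝ) 1 ∧ ⌊a - w⌋ = ⌊b - w⌋} := by
  have h0 : ENNReal.ofReal (1 - d) ≤ ENNReal.ofReal (1 - (b - a)) :=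
    ENNReal.ofReal_le_ofReal (by linarith)
  refine h0.trans ?_
  have hf0 := Int.floor_le a
  have hf1 := Int.lt_floor_add_one a
  set N := ⌊a⌋ with hN
  by_cases h : a - N + (b - a) ≤ 1
  · have hsub : Set.Ioo (0 : ℝ) 1 \ Set.Ioc (a - N) (b - N) ⊆
        {w : ℝ | w ∈ Set.Ico (0 : ℝ) 1 ∧ ⌊a - w⌋ = ⌊b - w⌋} := by
      rintro w ⟨⟨hw0, hw1⟩, hw⟩
      refine ⟨⟨hw0.le, hw1⟩, ?_⟩
      by_cases h1 : w ≤ a - N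
      · have e1 : ⌊a - w⌋ = N := by
          rw [Int.floor_eq_iff]; constructor <;> linarith
        have e2 : ⌊b - w⌋ = N := by
          rw [Int.floor_eq_iff]; constructor <;> linarith
        rw [e1, e2]
      · have h2 : b - N < w := by
          by_contra h3
          exact hw ⟨by linarith, by linarith⟩
        have e1 : ⌊a - w⌋ = N - 1 := by
          rw [Int.floor_eq_iff]; push_cast; constructor <;> linarith
        have e2 : ⌊b - w⌋ = N - 1 := by
          rw [Int.floor_eq_iff]; push_cast; constructor <;> linarith
        rw [e1, e2]
    refine le_trans ?_ (measure_mono hsub)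
    refine le_trans ?_ le_measure_diff
    rw [Real.volume_Ioo, Real.volume_Ioc, ← ENNReal.ofReal_sub _ (by linarith)]
    apply ENNReal.ofReal_le_ofReal
    linarith
  · have hsub : Set.Ioc (b - N - 1) (a - N) ⊆
        {w : ℝ | w ∈ Set.Ico (0 : ℝ) 1 ∧ ⌊a - w⌋ = ⌊b - w⌋} := by
      rintro w ⟨hw0, hw1⟩
      refine ⟨⟨by linarith, by linarith⟩, ?_⟩
      have e1 : ⌊a - w⌋ = N := by
        rw [Int.floor_eq_iff]; constructor <;> linarith
      have e2 : ⌊b - w⌋ = N := by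
        rw [Int.floor_eq_iff]; constructor <;> linarith
      rw [e1, e2]
    refine le_trans ?_ (measure_mono hsub)
    rw [Real.volume_Ioc]
    apply ENNReal.ofReal_le_ofReal
    linarith

theorem one_dim (a b d : ℝ) (hd : |a - b| ≤ d) :
    ENNReal.ofReal (1 - d) ≤ volume {w : ℝ | w ∈ Set.Ico (0 : ℝ) 1 ∧ ⌊a - w⌋ = ⌊b - w⌋} := by
  rw [abs_le] at hd
  rcases le_total a b with h | h
  · exact one_dim_aux a b d h (by linarith)
  · have := one_dim_aux b a d h (by linarith)
    simpa only [eq_comm] using this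

/-- **Cube separation, first claim** (paper's Lemma 3.2): two points obtained by
perturbing the same lattice point `Ax` by errors of ℓ∞ norm at most `λ/(2ck)` fall into
the same randomly shifted grid cell with probability at least `(1 − 1/k)^m` over the
uniform shift `w ∈ [0,1)^m`. -/
theorem cube_separation_same_cell
    (q n m k c : ℕ) (hq : 1 ≤ q) (hn : 1 ≤ n) (hm : 1 ≤ m) (hk : 1 ≤ k) (hc : 8 ≤ c)
    (A : Matrix (Fin m) (Fin n) (ZMod q))
    (lam z : ℝ) (hlam : lam = lambdaOneInf A)
    (hz : z = (q : ℝ) / c) (hzlam : z ≤ lam / 2)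
    (x : Fin n → ZMod q)
    (e₁ e₂ : Fin m → ℝ)
    (he₁ : ∀ i, |e₁ i| ≤ lam / (2 * c * k)) (he₂ : ∀ i, |e₂ i| ≤ lam / (2 * c * k))
    (u v : Fin m → ℝ)
    (hu : ∀ i, u i = ((A.mulVec x i).val : ℝ) + e₁ i)
    (hv : ∀ i, v i = ((A.mulVec x i).val : ℝ) + e₂ i) :
    ENNReal.ofReal ((1 - 1 / (k : ℝ))^m)
      ≤ volume {w : Fin m → ℝ |
          (∀ i, w i ∈ Set.Ico (0 : ℝ) 1) ∧
          ∀ i, ⌊rmod (u i / z - w i) c⌋ = ⌊rmod (v i / z - w i) c⌋} := by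
  have hq' : (0 : ℝ) < q := by exact_mod_cast hq
  have hc' : (0 : ℝ) < c := by exact_mod_cast (by omega : 0 < c)
  have hk' : (1 : ℝ) ≤ k := by exact_mod_cast hk
  have hk0 : (0 : ℝ) < k := by linarith
  have hz0 : 0 < z := by rw [hz]; positivity
  have hlq : lam ≤ q := hlam ▸ lambdaOneInf_le hq hm A
  have hclose : ∀ i, |u i / z - v i / z| ≤ 1 / (k : ℝ) := by
    intro i
    rw [← sub_div, abs_div, abs_of_pos hz0, div_le_iff₀ hz0]
    have h1 : |u i - v i| ≤ |e₁ i| + |e₂ i| := by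
      rw [hu, hv, add_sub_add_left_eq_sub]
      exact abs_sub _ _
    have h2 : lam / (2 * c * k) ≤ q / (2 * c * k) := by gcongr
    have h3 : (q : ℝ) / (2 * c * k) + q / (2 * c * k) = 1 / k * z := by
      rw [hz]; field_simp; norm_num
    linarith [he₁ i, he₂ i]
  have hsub : Set.pi Set.univ (fun i : Fin m =>
      {w : ℝ | w ∈ Set.Ico (0 : ℝ) 1 ∧ ⌊u i / z - w⌋ = ⌊v i / z - w⌋}) ⊆
      {w : Fin m → ℝ |
          (∀ i, w i ∈ Set.Ico (0 : ℝ) 1) ∧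
          ∀ i, ⌊rmod (u i / z - w i) c⌋ = ⌊rmod (v i / z - w i) c⌋} := by
    intro w hw
    refine ⟨fun i => (hw i (Set.mem_univ i)).1, fun i => ?_⟩
    rw [floor_rmod, floor_rmod, (hw i (Set.mem_univ i)).2]
  refine le_trans ?_ (measure_mono hsub)
  rw [volume_pi_pi]
  have hnn : 0 ≤ 1 - 1 / (k : ℝ) := by
    rw [sub_nonneg, div_le_one hk0]; exact hk'
  rw [ENNReal.ofReal_pow hnn]
  calc ENNReal.ofReal (1 - 1 / (k : ℝ)) ^ m
      = ∏ _i : Fin m, ENNReal.ofReal (1 - 1 / (k : ℝ)) := by simp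
    _ ≤ _ := Finset.prod_le_prod' fun i _ => one_dim _ _ _ (hclose i)
end

section
/- Let q, n, m, k, c be positive integers with c ≥ 8, let A ∈ (ℤ/qℤ)^{m×n}, write λ = λ₁^∞(Λ_q(A)) and z = q/c, and assume z ≤ λ/2. Let x, x̂ ∈ (ℤ/qℤ)ⁿ with Ax ≠ Ax̂, let ū, v̄ ∈ {0,1,…,q−1}^m be the coordinatewise lifts of Ax and Ax̂ respectively, and let e₁, e₂ ∈ ℝ^m satisfy ‖e₁‖_∞ ≤ λ/(2ck) and ‖e₂‖_∞ ≤ λ/(2ck); set u = ū + e₁ and v = v̄ + e₂. Then for every w ∈ [0,1)^m there exists a coordinate i ∈ {1,…,m} with ⌊(u_i/z − w_i) mod c⌋ ≠ ⌊(v_i/z − w_i) mod c⌋, where t mod c denotes the representative of t in [0,c). -/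
/-- **Cube separation, second claim** (paper's Lemma 3.2): points obtained from distinct
lattice points `Ax ≠ Axhat` by perturbations of ℓ∞ norm at most `λ/(2ck)` always fall into
distinct grid cells, for every grid shift `w ∈ [0,1)^m`. -/
theorem cube_separation_distinct_cells
    (q n m k c : ℕ) (hq : 1 ≤ q) (hn : 1 ≤ n) (hm : 1 ≤ m) (hk : 1 ≤ k) (hc : 8 ≤ c)
    (A : Matrix (Fin m) (Fin n) (ZMod q))
    (lam z : ℝ) (hlam : lam = lambdaOneInf A)
    (hz : z = (q : ℝ) / c) (hzlam : z ≤ lam / 2)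
    (x xhat : Fin n → ZMod q) (hxx : A.mulVec x ≠ A.mulVec xhat)
    (e₁ e₂ : Fin m → ℝ)
    (he₁ : ∀ i, |e₁ i| ≤ lam / (2 * c * k)) (he₂ : ∀ i, |e₂ i| ≤ lam / (2 * c * k))
    (u v : Fin m → ℝ)
    (hu : ∀ i, u i = ((A.mulVec x i).val : ℝ) + e₁ i)
    (hv : ∀ i, v i = ((A.mulVec xhat i).val : ℝ) + e₂ i)
    (w : Fin m → ℝ) (hw : ∀ i, w i ∈ Set.Ico (0 : ℝ) 1) :
    ∃ i, ⌊rmod (u i / z - w i) c⌋ ≠ ⌊rmod (v i / z - w i) c⌋ := by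
  by_contra hcon
  push Not at hcon
  haveI : NeZero q := ⟨by omega⟩
  haveI : NeZero m := ⟨by omega⟩
  have hq0 : (0 : ℝ) < q := by exact_mod_cast hq
  have hc8 : (8 : ℝ) ≤ c := by exact_mod_cast hc
  have hk1 : (1 : ℝ) ≤ k := by exact_mod_cast hk
  have hc0 : (0 : ℝ) < c := by linarith
  have hz0 : 0 < z := by rw [hz]; positivity
  have hl0 : 0 < lam := by linarith
  have hcz : c * z = q := by rw [hz]; field_simp
  have he : lam / (2 * c * k) ≤ lam / 16 := by
    apply div_le_div_of_nonneg_left hl0.le (by norm_num)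
    nlinarith
  let N : Fin m → ℤ := fun i => ⌊(u i / z - w i) / c⌋ - ⌊(v i / z - w i) / c⌋
  let y : Fin m → ℤ := fun i =>
    ((A.mulVec x i).val : ℤ) - ((A.mulVec xhat i).val : ℤ) - q * N i
  have hycast : ∀ i, ((y i : ℤ) : ZMod q) = A.mulVec x i - A.mulVec xhat i := by
    intro i
    simp [y]
  have hy0 : y ≠ 0 := by
    intro h
    apply hxx
    funext i
    have h1 := hycast i
    rw [h] at h1
    simp only [Pi.zero_apply, Int.cast_zero] at h1
    exact (sub_eq_zero.mp h1.symm)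
  have hyL : inQaryLattice A y := by
    refine ⟨x - xhat, ?_⟩
    rw [Matrix.mulVec_sub]
    funext i
    exact hycast i
  have hle : lam ≤ intLinfNorm y := by
    rw [hlam]
    apply csInf_le
    · refine ⟨0, ?_⟩
      rintro t ⟨y', -, -, rfl⟩
      exact Nat.cast_nonneg _
    · exact ⟨y, hy0, hyL, rfl⟩
  obtain ⟨i, -, hi⟩ := Finset.exists_mem_eq_sup (Finset.univ : Finset (Fin m))
    Finset.univ_nonempty (fun i => (y i).natAbs)
  have hnorm : intLinfNorm y = |((y i : ℤ) : ℝ)| := by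
    unfold intLinfNorm
    rw [hi, Nat.cast_natAbs, Int.cast_abs]
  have hd := Int.abs_sub_lt_one_of_floor_eq_floor (hcon i)
  have hyr : ((y i : ℤ) : ℝ) =
      z * (rmod (u i / z - w i) c - rmod (v i / z - w i) c) - e₁ i + e₂ i := by
    have h1 : z * (rmod (u i / z - w i) c - rmod (v i / z - w i) c)
        = u i - v i - c * z * (N i : ℝ) := by
      simp only [rmod, N]
      push_cast
      field_simp
      ring
    rw [h1, hcz, hu, hv]
    simp only [y]
    push_cast
    ring
  have h1 := abs_le.mp (he₁ i)
  have h2 := abs_le.mp (he₂ i)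
  have h3 := abs_lt.mp hd
  have : |((y i : ℤ) : ℝ)| < lam := by
    rw [hyr, abs_lt]
    constructor <;> nlinarith
  linarith
end

section
/- Let z > 0 be a real number, let c ≥ 1 be an integer, and let a, b be real numbers with |a − b| ≤ z. Then the Lebesgue measure of the set {w ∈ [0,1) : ⌊(a/z − w) mod c⌋ ≠ ⌊(b/z − w) mod c⌋} is at most |a − b|/z, where t mod c denotes the representative of t in [0,c). -/
open MeasureTheory

lemma floor_rmod_aux (c : ℕ) (t : ℝ) :
    ⌊rmod t c⌋ = ⌊t⌋ - c * (⌊t⌋ / (c : ℤ)) := by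
  have h1 : ⌊t / (c : ℝ)⌋ = ⌊t⌋ / (c : ℤ) := Int.floor_div_natCast t c
  unfold rmod
  rw [h1]
  have h2 : t - (c : ℝ) * ((⌊t⌋ / (c : ℤ) : ℤ) : ℝ)
      = t - (((c : ℤ) * (⌊t⌋ / (c : ℤ)) : ℤ) : ℝ) := by
    rw [Int.cast_mul, Int.cast_natCast]
  rw [h2, Int.floor_sub_intCast]

lemma grid_aux (x y : ℝ) (hxy : x ≤ y) (h1 : y - x ≤ 1) :
    volume {w : ℝ | w ∈ Set.Ico (0 : ℝ) 1 ∧ ⌊x - w⌋ ≠ ⌊y - w⌋} ≤ ENNReal.ofReal (y - x) := by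
  have hx1 := Int.floor_le x
  have hx2 := Int.lt_floor_add_one x
  by_cases hy : y < ⌊x⌋ + 1
  · have hsub : {w : ℝ | w ∈ Set.Ico (0 : ℝ) 1 ∧ ⌊x - w⌋ ≠ ⌊y - w⌋}
        ⊆ Set.Ioc (x - ⌊x⌋) (y - ⌊x⌋) := by
      rintro w ⟨⟨hw0, hw1⟩, hne⟩
      by_contra hn
      apply hne
      by_cases hw : w ≤ x - ⌊x⌋
      · exact ((Int.floor_eq_iff (z := ⌊x⌋)).2 ⟨by linarith, by linarith⟩).trans
          ((Int.floor_eq_iff (z := ⌊x⌋)).2 ⟨by linarith, by linarith⟩).symm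
      · have hw' : y - ⌊x⌋ < w := by
          by_contra h
          exact hn ⟨not_le.1 hw, not_lt.1 h⟩
        push Not at hw
        exact ((Int.floor_eq_iff (z := ⌊x⌋ - 1)).2 ⟨by push_cast; linarith, by push_cast; linarith⟩).trans
          ((Int.floor_eq_iff (z := ⌊x⌋ - 1)).2 ⟨by push_cast; linarith, by push_cast; linarith⟩).symm
    refine (measure_mono hsub).trans ?_
    rw [Real.volume_Ioc]
    exact ENNReal.ofReal_le_ofReal (by linarith)
  · push Not at hy
    have hsub : {w : ℝ | w ∈ Set.Ico (0 : ℝ) 1 ∧ ⌊x - w⌋ ≠ ⌊y - w⌋}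
        ⊆ Set.Icc 0 (y - ⌊x⌋ - 1) ∪ Set.Ioo (x - ⌊x⌋) 1 := by
      rintro w ⟨⟨hw0, hw1⟩, hne⟩
      by_contra hn
      apply hne
      have ha : y - ⌊x⌋ - 1 < w := by
        by_contra h
        exact hn (Or.inl ⟨hw0, not_lt.1 h⟩)
      have hb : w ≤ x - ⌊x⌋ := by
        by_contra h
        exact hn (Or.inr ⟨not_le.1 h, hw1⟩)
      exact ((Int.floor_eq_iff (z := ⌊x⌋)).2 ⟨by linarith, by linarith⟩).trans
          ((Int.floor_eq_iff (z := ⌊x⌋)).2 ⟨by linarith, by linarith⟩).symm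
    refine (measure_mono hsub).trans ((measure_union_le _ _).trans ?_)
    rw [Real.volume_Icc, Real.volume_Ioo,
      ← ENNReal.ofReal_add (by linarith) (by linarith)]
    exact ENNReal.ofReal_le_ofReal (by linarith)

/-- **Single-coordinate cell-separation probability** (core computation in the paper's
Lemma 3.2): a uniformly shifted grid of cell width `z` separates two reals at distance
`|a − b| ≤ z` with probability at most `|a − b|/z`. -/
theorem grid_separation_probability (z : ℝ) (hz : 0 < z) (c : ℕ) (hc : 1 ≤ c)
    (a b : ℝ) (hab : |a - b| ≤ z) :
    volume {w : ℝ | w ∈ Set.Ico (0 : ℝ) 1 ∧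
        ⌊rmod (a / z - w) c⌋ ≠ ⌊rmod (b / z - w) c⌋}
      ≤ ENNReal.ofReal (|a - b| / z) := by
  have hsub : {w : ℝ | w ∈ Set.Ico (0 : ℝ) 1 ∧
        ⌊rmod (a / z - w) c⌋ ≠ ⌊rmod (b / z - w) c⌋}
      ⊆ {w : ℝ | w ∈ Set.Ico (0 : ℝ) 1 ∧ ⌊a / z - w⌋ ≠ ⌊b / z - w⌋} := by
    rintro w ⟨hw, hne⟩
    refine ⟨hw, fun h => hne ?_⟩
    rw [floor_rmod_aux, floor_rmod_aux, h]
  refine (measure_mono hsub).trans ?_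
  have hd : |a - b| / z ≤ 1 := (div_le_one hz).2 hab
  rcases le_total a b with h | h
  · have he : |a - b| / z = b / z - a / z := by
      rw [abs_of_nonpos (by linarith)]; ring
    rw [he] at hd ⊢
    exact grid_aux _ _ (by gcongr) hd
  · have he : |a - b| / z = a / z - b / z := by
      rw [abs_of_nonneg (by linarith)]; ring
    rw [he] at hd ⊢
    have := grid_aux (b / z) (a / z) (by gcongr) hd
    simpa only [ne_comm] using this
end

section
/- For every real r > 0, ∑_{n∈ℤ} exp(−π n²/(4r²)) ≤ 2 · ∑_{n∈ℤ} exp(−π n²/r²); equivalently, ρ_{2r}(ℤ) ≤ 2 ρ_r(ℤ). -/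
open Real

lemma summable_gauss_aux (a : ℝ) (ha : 0 < a) :
    Summable fun n : ℤ => Real.exp (-π / a * (n : ℝ)^2) := by
  have h := summable_pow_mul_jacobiTheta₂_term_bound 0 (T := 1 / a) (by positivity) 0
  refine h.congr fun n => ?_
  simp only [pow_zero, one_mul]
  congr 1
  ring

/-- `ρ_{2r}(ℤ) ≤ 2 ρ_r(ℤ)` (established via Poisson summation in the paper's proof of
Lemma 2.1): for every `r > 0`, `∑_{n∈ℤ} exp(−π n²/(4r²)) ≤ 2 ∑_{n∈ℤ} exp(−π n²/r²)`. -/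
theorem gaussian_mass_double_width (r : ℝ) (hr : 0 < r) :
    (∑' n : ℤ, Real.exp (-π * (n : ℝ)^2 / (4 * r^2)))
      ≤ 2 * ∑' n : ℤ, Real.exp (-π * (n : ℝ)^2 / r^2) := by
  have key : ∀ s : ℝ, 0 < s → (∑' n : ℤ, Real.exp (-π * (n : ℝ)^2 / s^2))
      = s * ∑' n : ℤ, Real.exp (-π / (1 / s^2) * (n : ℝ)^2) := by
    intro s hs
    have h := Real.tsum_exp_neg_mul_int_sq (a := 1 / s^2) (by positivity)
    have h2 : (1 : ℝ) / (1 / s^2) ^ (1 / 2 : ℝ) = s := by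
      rw [← Real.sqrt_eq_rpow, Real.sqrt_div zero_le_one, Real.sqrt_sq hs.le]
      simp
    rw [h2] at h
    rw [← h]
    refine tsum_congr fun n => ?_
    congr 1
    ring
  have e : 4 * r^2 = (2 * r)^2 := by ring
  rw [e, key (2 * r) (by positivity), key r hr, ← mul_assoc]
  refine mul_le_mul_of_nonneg_left ?_ (by positivity)
  refine Summable.tsum_le_tsum (fun n => ?_) (summable_gauss_aux _ (by positivity))
    (summable_gauss_aux _ (by positivity))
  apply Real.exp_le_exp.mpr
  have h0 : 0 ≤ π * r^2 * (n : ℝ)^2 := by positivity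
  have h1 : -π / (1 / (2 * r)^2) * (n : ℝ)^2 = -4 * (π * r^2 * (n : ℝ)^2) := by
    field_simp
    ring
  have h2 : -π / (1 / r^2) * (n : ℝ)^2 = -(π * r^2 * (n : ℝ)^2) := by
    field_simp
  rw [h1, h2]
  linarith
end

section
/- For every real s > 0, every real κ ≥ 0, and every integer m ≥ 1, ∑_{e∈ℤ^m, ‖e‖_∞ > √κ·s} exp(−π‖e‖₂²/s²) ≤ 2m·exp(−(3π/4)·κ) · (∑_{j∈ℤ} exp(−π j²/s²))^m. -/
open Real

lemma aux_summable {a : ℝ} (ha : 0 < a) :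
    Summable (fun n : ℤ => Real.exp (-π * a * (n : ℝ)^2)) := by
  have h := summable_pow_mul_jacobiTheta₂_term_bound 0 ha 0
  refine h.congr fun n => ?_
  simp [mul_assoc]

lemma aux_theta {a : ℝ} (ha : 0 < a) :
    ∑' n : ℤ, Real.exp (-π * (a / 4) * (n : ℝ)^2) ≤
      2 * ∑' n : ℤ, Real.exp (-π * a * (n : ℝ)^2) := by
  have ha4 : 0 < a / 4 := by positivity
  rw [Real.tsum_exp_neg_mul_int_sq ha4, Real.tsum_exp_neg_mul_int_sq ha]
  have h4 : (1 : ℝ) / (a / 4) ^ (1 / 2 : ℝ) = 2 * (1 / a ^ (1 / 2 : ℝ)) := by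
    rw [← Real.sqrt_eq_rpow, ← Real.sqrt_eq_rpow, Real.sqrt_div ha.le,
      show (4 : ℝ) = 2 ^ 2 by norm_num, Real.sqrt_sq (by norm_num)]
    have := Real.sqrt_pos.2 ha
    field_simp
  rw [h4, mul_assoc]
  have key : ∑' n : ℤ, Real.exp (-π / (a / 4) * (n : ℝ)^2) ≤
      ∑' n : ℤ, Real.exp (-π / a * (n : ℝ)^2) := by
    have s1 : Summable (fun n : ℤ => Real.exp (-π / (a / 4) * (n : ℝ)^2)) := by
      simpa only [div_eq_mul_inv] using aux_summable (inv_pos.2 ha4)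
    have s2 : Summable (fun n : ℤ => Real.exp (-π / a * (n : ℝ)^2)) := by
      simpa only [div_eq_mul_inv] using aux_summable (inv_pos.2 ha)
    refine s1.tsum_le_tsum (fun n => Real.exp_le_exp.2 ?_) s2
    have : 0 ≤ π / a * (n : ℝ)^2 := by positivity
    have e1 : -π / (a / 4) * (n : ℝ)^2 = -(4 * (π / a * (n : ℝ)^2)) := by field_simp
    have e2 : -π / a * (n : ℝ)^2 = -(π / a * (n : ℝ)^2) := by ring
    rw [e1, e2]; linarith
  gcongr

lemma aux_prod : ∀ (m : ℕ) (f : Fin m → ℤ → ℝ), (∀ i, 0 ≤ f i) → (∀ i, Summable (f i)) →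
    HasSum (fun e : Fin m → ℤ => ∏ i, f i (e i)) (∏ i, ∑' j, f i j) := by
  intro m
  induction m with
  | zero =>
    intro f _ _
    simp
  | succ m ih =>
    intro f h0 hf
    have h1 := ih (fun i => f i.succ) (fun i => h0 _) (fun i => hf _)
    have h1n : 0 ≤ (fun e : Fin m → ℤ => ∏ i, f (Fin.succ i) (e i)) :=
      fun e => Finset.prod_nonneg fun i _ => h0 (Fin.succ i) (e i)
    have h1s : Summable (fun e : Fin m → ℤ => ∏ i, f (Fin.succ i) (e i)) := h1.summable
    have hps := Summable.mul_of_nonneg (hf 0) h1s (h0 0) h1n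
    have h2 := HasSum.mul (hf 0).hasSum h1 hps
    rw [Fin.prod_univ_succ, ← (Fin.consEquiv (fun _ : Fin (m + 1) => ℤ)).hasSum_iff]
    have h3 : ((fun e : Fin (m + 1) → ℤ => ∏ i, f i (e i)) ∘
        (Fin.consEquiv (fun _ : Fin (m + 1) => ℤ))) =
        fun x : ℤ × (Fin m → ℤ) => f 0 x.1 * ∏ i, f (Fin.succ i) (x.2 i) := by
      funext x
      simp [Fin.consEquiv, Fin.prod_univ_succ]
    rw [h3]
    exact h2

/-- **ℓ∞ tail bound for the m-dimensional discrete Gaussian** (union bound over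
coordinates from the paper's Lemma 2.1, with explicit constant): for `s > 0`, `κ ≥ 0`
and `m ≥ 1`,
`∑_{e∈ℤ^m, ‖e‖_∞ > √κ s} exp(−π‖e‖₂²/s²) ≤ 2 m exp(−(3π/4)κ) (∑_{j∈ℤ} exp(−π j²/s²))^m`. -/
theorem gaussian_linf_tail_bound (s κ : ℝ) (hs : 0 < s) (hκ : 0 ≤ κ) (m : ℕ) (hm : 1 ≤ m) :
    (∑' e : {e : Fin m → ℤ // ∃ i, Real.sqrt κ * s < |((e i : ℤ) : ℝ)|},
        Real.exp (-π * (∑ i, (((e : Fin m → ℤ) i : ℝ))^2) / s^2))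
      ≤ 2 * m * Real.exp (-(3 * π / 4) * κ) *
          (∑' j : ℤ, Real.exp (-π * (j : ℝ)^2 / s^2))^m := by
  classical
  set a : ℝ := (s ^ 2)⁻¹ with ha_def
  have ha : 0 < a := by positivity
  set c : ℝ := Real.exp (-(3 * π / 4) * κ) with hc
  have hc0 : 0 < c := Real.exp_pos _
  have hB : ∑' j : ℤ, Real.exp (-π * (j : ℝ)^2 / s^2) =
      ∑' j : ℤ, Real.exp (-π * a * (j : ℝ)^2) := by
    refine tsum_congr fun j => ?_
    congr 1
    rw [ha_def]; ring
  rw [hB]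
  set B : ℝ := ∑' j : ℤ, Real.exp (-π * a * (j : ℝ)^2) with hBdef
  have hB0 : 0 ≤ B := tsum_nonneg fun j => (Real.exp_pos _).le
  let g : Fin m → Fin m → ℤ → ℝ := fun i k j =>
    if k = i then c * Real.exp (-π * (a / 4) * (j : ℝ)^2) else Real.exp (-π * a * (j : ℝ)^2)
  have hg0 : ∀ i k j, 0 ≤ g i k j := by
    intro i k j
    dsimp only [g]
    split_ifs <;> positivity
  have hgs : ∀ i k, Summable (g i k) := by
    intro i k
    by_cases h : k = i
    · simpa only [g, h, if_true] using
        (aux_summable (a := a / 4) (by positivity)).mul_left c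
    · simpa only [g, h, if_false] using aux_summable ha
  have hG : ∀ i, HasSum (fun e : Fin m → ℤ => ∏ k, g i k (e k)) (∏ k, ∑' j, g i k j) :=
    fun i => aux_prod m (g i) (fun k j => hg0 i k j) (hgs i)
  have hGle : ∀ i, ∏ k, ∑' j, g i k j ≤ 2 * c * B ^ m := by
    intro i
    calc ∏ k, ∑' j, g i k j ≤ ∏ k : Fin m, (B * if k = i then 2 * c else 1) := by
          refine Finset.prod_le_prod (fun k _ => tsum_nonneg (hg0 i k)) fun k _ => ?_
          by_cases h : k = i
          · simp only [g, h, if_true]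
            rw [tsum_mul_left]
            have := mul_le_mul_of_nonneg_left (aux_theta ha) hc0.le
            linarith
          · simp only [g, h, if_false, mul_one]
            exact le_rfl
      _ = 2 * c * B ^ m := by
          rw [Finset.prod_mul_distrib]
          simp
          ring
  have hS := hasSum_sum (s := Finset.univ) fun i _ => hG i
  have hpt : ∀ e : Fin m → ℤ, ∀ i, Real.sqrt κ * s < |((e i : ℤ) : ℝ)| →
      Real.exp (-π * (∑ i, ((e i : ℝ))^2) / s^2) ≤ ∏ k, g i k (e k) := by
    intro e i hi
    have e1 : -π * (∑ i, ((e i : ℝ))^2) / s^2 = ∑ k, (-π * a * (e k : ℝ)^2) := by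
      rw [← Finset.mul_sum, ha_def]; ring
    rw [e1, Real.exp_sum]
    refine Finset.prod_le_prod (fun k _ => (Real.exp_pos _).le) fun k _ => ?_
    by_cases h : k = i
    · subst h
      simp only [g, if_true]
      rw [hc, ← Real.exp_add, Real.exp_le_exp]
      have h1 : κ * s ^ 2 ≤ (e k : ℝ)^2 := by
        have h2 : (Real.sqrt κ * s) ^ 2 ≤ |(e k : ℝ)| ^ 2 :=
          pow_le_pow_left₀ (by positivity) hi.le 2
        rwa [mul_pow, Real.sq_sqrt hκ, sq_abs] at h2
      have h3 : κ ≤ a * (e k : ℝ)^2 := by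
        rw [ha_def, inv_mul_eq_div, le_div_iff₀ (by positivity)]
        exact h1
      have := mul_le_mul_of_nonneg_left h3 Real.pi_pos.le
      linarith
    · simp only [g, h, if_false]
      exact le_rfl
  have hle : ∀ e : {e : Fin m → ℤ // ∃ i, Real.sqrt κ * s < |((e i : ℤ) : ℝ)|},
      Real.exp (-π * (∑ i, (((e : Fin m → ℤ) i : ℝ))^2) / s^2) ≤
        ∑ i, ∏ k, g i k ((e : Fin m → ℤ) k) := by
    rintro ⟨e, i, hi⟩
    refine (hpt e i hi).trans ?_
    exact Finset.single_le_sum (f := fun i => ∏ k, g i k (e k))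
      (fun i _ => Finset.prod_nonneg fun k _ => hg0 _ _ _) (Finset.mem_univ i)
  have hSsub := hS.summable.subtype {e : Fin m → ℤ | ∃ i, Real.sqrt κ * s < |((e i : ℤ) : ℝ)|}
  have hsum1 : Summable fun e : {e : Fin m → ℤ // ∃ i, Real.sqrt κ * s < |((e i : ℤ) : ℝ)|} =>
      Real.exp (-π * (∑ i, (((e : Fin m → ℤ) i : ℝ))^2) / s^2) :=
    Summable.of_nonneg_of_le (fun e => (Real.exp_pos _).le) hle hSsub
  calc _ ≤ ∑' e : {e : Fin m → ℤ // ∃ i, Real.sqrt κ * s < |((e i : ℤ) : ℝ)|},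
        ∑ i, ∏ k, g i k ((e : Fin m → ℤ) k) := hsum1.tsum_le_tsum hle hSsub
    _ ≤ ∑' e : Fin m → ℤ, ∑ i, ∏ k, g i k (e k) :=
        hS.summable.tsum_subtype_le _ _
          (fun e => Finset.sum_nonneg fun i _ => Finset.prod_nonneg fun k _ => hg0 _ _ _)
    _ = ∑ i, ∏ k, ∑' j, g i k j := hS.tsum_eq
    _ ≤ ∑ i : Fin m, 2 * c * B ^ m := Finset.sum_le_sum fun i _ => hGle i
    _ = 2 * m * c * B ^ m := by
        simp
        ring
end
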